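/- The weighted estimation error of the preference-prior-informed ridge estimator satisfies ‖θ̃ − θ*‖_A ≤ ‖Σ_{s=1}^n ε_s x_s‖_{A⁻¹} + √λ·‖θ* − θ^pref‖, where ‖θ* − θ^pref‖ is the Euclidean norm. -/

import Mathlib

open Matrix Finset

/-!
Substituting the linear model into the normal equations `A θ̃ = P θ^pref + ∑ r_s x_s`, where
`A = P + ∑ x_s x_sᴴ`, splits the estimation error into a noise part and a prior bias:
`θ̃ - θ* = A⁻¹ ∑ ε_s x_s - A⁻¹ P (θ* - θ^pref)`. The noise part has `A`-norm exactly
`‖∑ ε_s x_s‖_{A⁻¹}`. For the bias part `w = A⁻¹ P v`, Cauchy–Schwarz for the form of `P` and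
`P ≤ A` give `‖w‖_A² = Re ⟨w, P v⟩ ≤ ‖w‖_P ‖v‖_P ≤ ‖w‖_A ‖v‖_P`, so `‖w‖_A ≤ ‖v‖_P`. Plain
ridge regression is `P = λ I`.
-/

open scoped ComplexOrder MatrixOrder

section InvMulVec

variable {ι R : Type*} [Fintype ι] [DecidableEq ι] [CommRing R] {A : Matrix ι ι R}

theorem mulVec_inv_mulVec (hA : IsUnit A) (v : ι → R) : A *ᵥ (A⁻¹ *ᵥ v) = v := by
  rw [mulVec_mulVec, mul_nonsing_inv A ((isUnit_iff_isUnit_det A).mp hA), one_mulVec]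

theorem inv_mulVec_mulVec (hA : IsUnit A) (v : ι → R) : A⁻¹ *ᵥ (A *ᵥ v) = v := by
  rw [mulVec_mulVec, nonsing_inv_mul A ((isUnit_iff_isUnit_det A).mp hA), one_mulVec]

end InvMulVec

section WeightedNorm

variable {ι 𝕜 : Type*} [Fintype ι] [RCLike 𝕜]

/-- The norm `‖v‖_M = √(vᴴ M v)` weighted by a matrix `M`. It is defined for every `M`, through the
real part of the quadratic form (with `√` of a negative number equal to `0`), but is a seminorm only
for positive semidefinite `M`. -/
noncomputable def weightedNorm (M : Matrix ι ι 𝕜) (v : ι → 𝕜) : ℝ :=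
  √(RCLike.re (star v ⬝ᵥ (M *ᵥ v)))

theorem weightedNorm_nonneg (M : Matrix ι ι 𝕜) (v : ι → 𝕜) : 0 ≤ weightedNorm M v :=
  Real.sqrt_nonneg _

theorem weightedNorm_sq {M : Matrix ι ι 𝕜} (hM : M.PosSemidef) (v : ι → 𝕜) :
    weightedNorm M v ^ 2 = RCLike.re (star v ⬝ᵥ (M *ᵥ v)) :=
  Real.sq_sqrt (hM.re_dotProduct_nonneg v)

theorem weightedNorm_eq_norm {M : Matrix ι ι 𝕜} (hM : M.PosSemidef) (v : ι → 𝕜) :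
    weightedNorm M v = (M.toSeminormedAddCommGroup hM).toNorm.norm v := by
  rw [weightedNorm, dotProduct_comm]
  rfl

theorem weightedNorm_sub_le {M : Matrix ι ι 𝕜} (hM : M.PosSemidef) (u v : ι → 𝕜) :
    weightedNorm M (u - v) ≤ weightedNorm M u + weightedNorm M v := by
  simpa only [weightedNorm_eq_norm hM] using
    @norm_sub_le _ (M.toSeminormedAddCommGroup hM).toSeminormedAddGroup u v

theorem re_dotProduct_mulVec_le_weightedNorm_mul_weightedNorm {M : Matrix ι ι 𝕜}
    (hM : M.PosSemidef) (u v : ι → 𝕜) :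
    RCLike.re (star u ⬝ᵥ (M *ᵥ v)) ≤ weightedNorm M u * weightedNorm M v := by
  rw [dotProduct_comm, weightedNorm_eq_norm hM, weightedNorm_eq_norm hM]
  exact @re_inner_le_norm 𝕜 _ _ (M.toSeminormedAddCommGroup hM) (M.toInnerProductSpace hM) u v

theorem weightedNorm_le_of_le {M N : Matrix ι ι 𝕜} (hMN : M ≤ N) (v : ι → 𝕜) :
    weightedNorm M v ≤ weightedNorm N v := by
  have hsub : 0 ≤ RCLike.re (star v ⬝ᵥ ((N - M) *ᵥ v)) :=
    (Matrix.le_iff.mp hMN).re_dotProduct_nonneg v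
  rw [sub_mulVec, dotProduct_sub, map_sub] at hsub
  exact Real.sqrt_le_sqrt (sub_nonneg.mp hsub)

variable [DecidableEq ι]

theorem weightedNorm_smul_one {c : ℝ} (hc : 0 ≤ c) (v : ι → 𝕜) :
    weightedNorm (c • (1 : Matrix ι ι 𝕜)) v = √c * √(RCLike.re (star v ⬝ᵥ v)) := by
  rw [weightedNorm, smul_mulVec, one_mulVec, dotProduct_smul, RCLike.smul_re, Real.sqrt_mul hc]

theorem weightedNorm_inv_mulVec {A : Matrix ι ι 𝕜} (hA : IsUnit A) (v : ι → 𝕜) :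
    weightedNorm A (A⁻¹ *ᵥ v) = weightedNorm A⁻¹ v := by
  rw [weightedNorm, weightedNorm, mulVec_inv_mulVec hA, star_dotProduct, RCLike.star_def,
    RCLike.conj_re]

theorem weightedNorm_inv_mulVec_mulVec_le {P A : Matrix ι ι 𝕜} (hP : P.PosSemidef) (hPA : P ≤ A)
    (hA : IsUnit A) (v : ι → 𝕜) : weightedNorm A (A⁻¹ *ᵥ (P *ᵥ v)) ≤ weightedNorm P v := by
  set w := A⁻¹ *ᵥ (P *ᵥ v) with hw
  have hA_psd : A.PosSemidef := nonneg_iff_posSemidef.mp (hP.nonneg.trans hPA)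
  have hsq : weightedNorm A w ^ 2 ≤ weightedNorm A w * weightedNorm P v :=
    calc weightedNorm A w ^ 2 = RCLike.re (star w ⬝ᵥ (P *ᵥ v)) := by
          rw [weightedNorm_sq hA_psd, hw, mulVec_inv_mulVec hA]
      _ ≤ weightedNorm P w * weightedNorm P v :=
          re_dotProduct_mulVec_le_weightedNorm_mul_weightedNorm hP w v
      _ ≤ weightedNorm A w * weightedNorm P v :=
          mul_le_mul_of_nonneg_right (weightedNorm_le_of_le hPA w) (weightedNorm_nonneg P v)
  rcases (weightedNorm_nonneg A w).eq_or_lt with hzero | hpos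
  · exact hzero ▸ weightedNorm_nonneg P v
  · exact le_of_mul_le_mul_left (sq (weightedNorm A w) ▸ hsq) hpos

end WeightedNorm

section RidgeEstimator

variable {ι κ R : Type*} [Fintype ι] [Fintype κ] [CommRing R] [Star R]

/-- The Gram matrix `P + ∑ x_s x_sᴴ` of the design vectors `x`, regularized by a penalty matrix `P`;
plain ridge regression has `P = λ I`. -/
def regularizedGram (P : Matrix ι ι R) (x : κ → ι → R) : Matrix ι ι R :=
  P + ∑ s, vecMulVec (x s) (star (x s))

theorem regularizedGram_mulVec (P : Matrix ι ι R) (x : κ → ι → R) (v : ι → R) :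
    regularizedGram P x *ᵥ v = P *ᵥ v + ∑ s, (star (x s) ⬝ᵥ v) • x s := by
  simp only [regularizedGram, add_mulVec, sum_mulVec, vecMulVec_mulVec, op_smul_eq_smul]

variable [DecidableEq ι]

/-- The generalized ridge estimator with penalty matrix `P`, prior guess `θ₀`, design vectors `x`
and rewards `r`: the solution of the normal equations
`(P + ∑ x_s x_sᴴ) θ = P θ₀ + ∑ r_s x_s`, meaningful when that matrix is invertible. -/
noncomputable def ridgeEstimator (P : Matrix ι ι R) (x : κ → ι → R) (θ₀ : ι → R) (r : κ → R) :
    ι → R :=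
  (regularizedGram P x)⁻¹ *ᵥ (P *ᵥ θ₀ + ∑ s, r s • x s)

theorem ridgeEstimator_sub_eq {P : Matrix ι ι R} {x : κ → ι → R}
    (hA : IsUnit (regularizedGram P x)) (θ₀ θ : ι → R) (ε : κ → R) :
    ridgeEstimator P x θ₀ (fun s ↦ star (x s) ⬝ᵥ θ + ε s) - θ =
      (regularizedGram P x)⁻¹ *ᵥ (∑ s, ε s • x s) -
        (regularizedGram P x)⁻¹ *ᵥ (P *ᵥ (θ - θ₀)) := by
  have hmoment : P *ᵥ θ₀ + ∑ s, (star (x s) ⬝ᵥ θ + ε s) • x s =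
      regularizedGram P x *ᵥ θ + (∑ s, ε s • x s - P *ᵥ (θ - θ₀)) := by
    simp only [regularizedGram_mulVec, mulVec_sub, add_smul, sum_add_distrib]
    abel
  rw [ridgeEstimator, hmoment, mulVec_add, inv_mulVec_mulVec hA, mulVec_sub,
    add_sub_cancel_left]

end RidgeEstimator

section Positivity

variable {ι κ R : Type*} [Finite ι] [Fintype κ]
  [CommRing R] [PartialOrder R] [StarRing R] [StarOrderedRing R]

theorem posSemidef_sum_vecMulVec_self_star (x : κ → ι → R) :
    (∑ s, vecMulVec (x s) (star (x s))).PosSemidef :=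
  posSemidef_sum _ fun s _ ↦ posSemidef_vecMulVec_self_star (x s)

theorem posDef_regularizedGram {P : Matrix ι ι R} (hP : P.PosDef) (x : κ → ι → R) :
    (regularizedGram P x).PosDef :=
  hP.add_posSemidef (posSemidef_sum_vecMulVec_self_star x)

end Positivity

section ErrorBound

variable {ι κ 𝕜 : Type*} [Fintype κ] [RCLike 𝕜]

theorem le_regularizedGram [Finite ι] (P : Matrix ι ι 𝕜) (x : κ → ι → 𝕜) :
    P ≤ regularizedGram P x :=
  le_add_of_nonneg_right (posSemidef_sum_vecMulVec_self_star x).nonneg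

theorem ridge_weighted_error_bound_general [Fintype ι] [DecidableEq ι] {P : Matrix ι ι 𝕜}
    (hP : P.PosSemidef) {x : κ → ι → 𝕜} (hA : IsUnit (regularizedGram P x))
    (θpref θstar : ι → 𝕜) (ε : κ → 𝕜) :
    weightedNorm (regularizedGram P x)
        (ridgeEstimator P x θpref (fun s ↦ star (x s) ⬝ᵥ θstar + ε s) - θstar) ≤
      weightedNorm (regularizedGram P x)⁻¹ (∑ s, ε s • x s) + weightedNorm P (θstar - θpref) := by
  have hPA := le_regularizedGram P x
  have hA_psd : (regularizedGram P x).PosSemidef :=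
    nonneg_iff_posSemidef.mp (hP.nonneg.trans hPA)
  rw [ridgeEstimator_sub_eq hA, ← weightedNorm_inv_mulVec hA]
  exact (weightedNorm_sub_le hA_psd _ _).trans <|
    add_le_add_right (weightedNorm_inv_mulVec_mulVec_le hP hPA hA _) _

end ErrorBound

/-- Weighted estimation-error bound for the preference-prior-informed ridge estimator:
`‖θ̃ − θ*‖_A ≤ ‖∑ ε_s x_s‖_{A⁻¹} + √λ ‖θ* − θ^pref‖`. -/
theorem ridge_weighted_error_bound {d n : ℕ} (lam : ℝ) (hlam : 0 < lam)
    (x : Fin n → (Fin d → ℝ)) (θpref θstar : Fin d → ℝ) (ε : Fin n → ℝ)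
    (A : Matrix (Fin d) (Fin d) ℝ)
    (hA : A = lam • (1 : Matrix (Fin d) (Fin d) ℝ) + ∑ s, vecMulVec (x s) (x s))
    (r : Fin n → ℝ) (hr : ∀ s, r s = θstar ⬝ᵥ x s + ε s)
    (b : Fin d → ℝ) (hb : b = lam • θpref + ∑ s, r s • x s)
    (θtilde : Fin d → ℝ) (hθ : θtilde = A⁻¹ *ᵥ b) :
    Real.sqrt ((θtilde - θstar) ⬝ᵥ (A *ᵥ (θtilde - θstar))) ≤
      Real.sqrt ((∑ s, ε s • x s) ⬝ᵥ (A⁻¹ *ᵥ ∑ s, ε s • x s)) +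
        Real.sqrt lam * Real.sqrt ((θstar - θpref) ⬝ᵥ (θstar - θpref)) := by
  have hpen : (lam • (1 : Matrix (Fin d) (Fin d) ℝ)).PosDef := PosDef.one.smul hlam
  have hA' : A = regularizedGram (lam • (1 : Matrix (Fin d) (Fin d) ℝ)) x := hA
  have hr' : r = fun s ↦ star (x s) ⬝ᵥ θstar + ε s :=
    funext fun s ↦ by rw [hr, dotProduct_comm, star_trivial]
  have hθ' : θtilde = ridgeEstimator (lam • 1) x θpref (fun s ↦ star (x s) ⬝ᵥ θstar + ε s) := by
    rw [hθ, hb, hA', hr', ridgeEstimator, smul_mulVec, one_mulVec]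
  have hbound := ridge_weighted_error_bound_general hpen.posSemidef
    (posDef_regularizedGram hpen x).isUnit θpref θstar ε
  rw [← hθ', ← hA', weightedNorm_smul_one hlam.le] at hbound
  simpa only [weightedNorm, star_trivial, RCLike.re_to_real] using hbound
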